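/- Fix 2 ≤ k ≤ n and let 𝒜_k = {A ∈ S₊ⁿ(ℝ) : λᵢ(A)² = σ_{k−1,i}(γ) for some γ ∈ Γ_k with σ_k(γ) = 1}. Then for every symmetric n×n matrix M: inf_{A ∈ 𝒜_k} trace(AᵀMA) = k·σ_k(λ(M))^{1/k} if λ(M) ∈ closure(Γ_k), and −∞ otherwise. -/

import Mathlib

open Matrix

/-- The `j`-th elementary symmetric polynomial of `x : Fin n → ℝ`. -/
def esymm (n j : ℕ) (x : Fin n → ℝ) : ℝ :=
  ∑ s ∈ Finset.powersetCard j (Finset.univ : Finset (Fin n)), ∏ i ∈ s, x i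

/-!
By Birkhoff's theorem, `trace (Aᴴ M A)` is at least `∑ i, λᵢ(M) μᵢ` for some ordering of the squared
eigenvalues `μᵢ` of `A` (Marcus' inequality), with equality when `A` and `M` are simultaneously
diagonal in the right order. The infimum over `𝒜ₖ` is therefore that of `∑ i, λᵢ(M) σₖ₋₁,ᵢ(γ)`, the
derivative of `σₖ` at `γ` in the direction `λ(M)`, over the hypersurface `σₖ(γ) = 1` of `Γₖ`.

On the closed cone, Gårding's inequality bounds this derivative below by `k σₖ(λ(M)) ^ (1 / k)`, and
`γ` proportional to (a perturbation of) `λ(M)` is extremal. Gårding's inequality follows from the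
superadditivity of the ratios `σⱼ₊₁ / σⱼ` (Marcus and Lopes), since `σₖ` is the product of `k` of
them. Outside the closed cone, the derivative is negative at some boundary point of `Γₖ` where
`σₖ = 0`; rescaling nearby points of `Γₖ` to `σₖ = 1` makes it tend to `-∞`.
-/

section RealRooted

open Polynomial

theorem splits_derivative {p : ℝ[X]} (hp : p.Splits) : p.derivative.Splits := by
  rw [splits_iff_card_roots] at hp ⊢
  have := p.card_roots_le_derivative
  have := p.derivative.card_roots'
  have := p.natDegree_derivative_le
  have : p.natDegree = 0 → p.derivative.natDegree = 0 := by omega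
  omega

theorem splits_iterate_derivative {p : ℝ[X]} (hp : p.Splits) (m : ℕ) :
    (derivative^[m] p).Splits := by
  induction m with
  | zero => exact hp
  | succ m ih =>
    rw [Function.iterate_succ_apply']
    exact splits_derivative ih

theorem laguerre_inequality {R : Type*} [Field R] [LinearOrder R] [IsStrictOrderedRing R]
    {p : R[X]} (hp : p.Splits) (x : R) :
    p.eval x * p.derivative.derivative.eval x ≤ p.derivative.eval x ^ 2 := by
  induction hp using Submonoid.closure_induction with
  | mem p hp =>
    rcases hp with ⟨c, rfl⟩ | ⟨a, rfl⟩
    · simp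
    · simp
  | one => simp
  | mul p q _ _ hp hq =>
    simp only [derivative_mul, derivative_add, eval_mul, eval_add]
    nlinarith [mul_le_mul_of_nonneg_left hq (sq_nonneg (p.eval x)),
      mul_le_mul_of_nonneg_left hp (sq_nonneg (q.eval x))]

theorem eval_zero_iterate_derivative {R : Type*} [Semiring R] (p : R[X]) (m : ℕ) :
    (derivative^[m] p).eval 0 = m.factorial * p.coeff m := by
  rw [← coeff_zero_eq_eval_zero, coeff_iterate_derivative, zero_add, Nat.descFactorial_self,
    nsmul_eq_mul]

theorem coeff_mul_coeff_add_two_le_sq {p : ℝ[X]} (hp : p.Splits) (m : ℕ) :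
    p.coeff m * p.coeff (m + 2) ≤ p.coeff (m + 1) ^ 2 := by
  have laguerre := laguerre_inequality (splits_iterate_derivative hp m) 0
  simp only [← Function.iterate_succ_apply' derivative, eval_zero_iterate_derivative,
    Nat.factorial_succ] at laguerre
  push_cast at laguerre
  have scaled : ((m : ℝ) + 2) * (p.coeff m * p.coeff (m + 2)) ≤ (m + 1) * p.coeff (m + 1) ^ 2 := by
    refine le_of_mul_le_mul_left ?_ (show (0 : ℝ) < m.factorial ^ 2 * (m + 1) by positivity)
    linarith
  rcases le_total (p.coeff m * p.coeff (m + 2)) 0 with hneg | hpos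
  · exact hneg.trans (sq_nonneg _)
  · nlinarith [hpos]

end RealRooted

/-- The `k`-th elementary symmetric polynomial `σ_k` of the variables `x i`, `i ∈ S`. Restricting
to a finset of indices makes `σ_{k,i}`, where the variable `x i` is dropped, another instance. -/
def esymmOn {ι R : Type*} [CommSemiring R] (S : Finset ι) (k : ℕ) (x : ι → R) : R :=
  ∑ s ∈ S.powersetCard k, ∏ i ∈ s, x i

/-- The derivative `∑ y i * σ_{k,i} x` of `σ_{k+1}` at `x` in the direction `y`. -/
def esymmDeriv {ι R : Type*} [CommSemiring R] [DecidableEq ι] (S : Finset ι) (k : ℕ)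
    (x y : ι → R) : R :=
  ∑ i ∈ S, y i * esymmOn (S.erase i) k x

section ElementarySymmetric

variable {ι R : Type*} [CommSemiring R]

@[simp]
theorem esymmOn_zero (S : Finset ι) (x : ι → R) : esymmOn S 0 x = 1 := by
  simp [esymmOn]

@[simp]
theorem esymmOn_one (S : Finset ι) (x : ι → R) : esymmOn S 1 x = ∑ i ∈ S, x i := by
  simp [esymmOn, Finset.powersetCard_one]

theorem esymmOn_eq_zero_of_card_lt {S : Finset ι} {k : ℕ} (h : S.card < k) (x : ι → R) :
    esymmOn S k x = 0 := by
  simp [esymmOn, Finset.powersetCard_eq_empty.2 h]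

theorem esymmOn_congr {S : Finset ι} {x y : ι → R} (h : ∀ i ∈ S, x i = y i) (k : ℕ) :
    esymmOn S k x = esymmOn S k y :=
  Finset.sum_congr rfl fun _ hs => Finset.prod_congr rfl fun i hi =>
    h i ((Finset.mem_powersetCard.1 hs).1 hi)

theorem esymmOn_smul (S : Finset ι) (k : ℕ) (c : R) (x : ι → R) :
    esymmOn S k (c • x) = c ^ k * esymmOn S k x := by
  rw [esymmOn, esymmOn, Finset.mul_sum]
  refine Finset.sum_congr rfl fun s hs => ?_
  simp [Finset.prod_mul_distrib, (Finset.mem_powersetCard.1 hs).2]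

theorem esymmOn_map {κ : Type*} (f : κ ↪ ι) (S : Finset κ) (k : ℕ) (x : ι → R) :
    esymmOn (S.map f) k x = esymmOn S k (x ∘ f) := by
  simp [esymmOn, Finset.powersetCard_map]

theorem continuous_esymmOn [TopologicalSpace R] [IsTopologicalSemiring R] (S : Finset ι) (k : ℕ) :
    Continuous (esymmOn S k : (ι → R) → R) := by
  unfold esymmOn
  fun_prop

variable [DecidableEq ι]

theorem esymmOn_indicator (S U : Finset ι) (k : ℕ) :
    esymmOn S k (fun i => if i ∈ U then (1 : R) else 0) = (S ∩ U).card.choose k := by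
  have hfilter : (S.powersetCard k).filter (· ⊆ U) = (S ∩ U).powersetCard k := by
    ext s
    simp only [Finset.mem_filter, Finset.mem_powersetCard, Finset.subset_inter_iff]
    tauto
  simp only [esymmOn, Finset.prod_boole, ← Finset.subset_iff, Finset.sum_boole, hfilter,
    Finset.card_powersetCard]

theorem esymmOn_insert {S : Finset ι} {i : ι} (hi : i ∉ S) (k : ℕ) (x : ι → R) :
    esymmOn (insert i S) (k + 1) x = esymmOn S (k + 1) x + x i * esymmOn S k x := by
  have hmem : ∀ {s : Finset ι} {m : ℕ}, s ∈ S.powersetCard m → i ∉ s :=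
    fun hs his => hi ((Finset.mem_powersetCard.1 hs).1 his)
  have hdisj : Disjoint (S.powersetCard (k + 1)) ((S.powersetCard k).image (insert i)) := by
    refine Finset.disjoint_right.2 fun s hs hs' => hmem hs' ?_
    obtain ⟨t, -, rfl⟩ := Finset.mem_image.1 hs
    exact Finset.mem_insert_self i t
  have hinj : Set.InjOn (insert i) (S.powersetCard k : Set (Finset ι)) := fun s hs t ht hst => by
    rw [← Finset.erase_insert (hmem hs), hst, Finset.erase_insert (hmem ht)]
  rw [esymmOn, Finset.powersetCard_succ_insert hi, Finset.sum_union hdisj,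
    Finset.sum_image hinj, esymmOn, esymmOn, Finset.mul_sum]
  exact congrArg _ (Finset.sum_congr rfl fun s hs => Finset.prod_insert (hmem hs))

theorem esymmOn_succ_eq_add_erase {S : Finset ι} {i : ι} (hi : i ∈ S) (k : ℕ) (x : ι → R) :
    esymmOn S (k + 1) x = esymmOn (S.erase i) (k + 1) x + x i * esymmOn (S.erase i) k x := by
  rw [← esymmOn_insert (Finset.notMem_erase i S), Finset.insert_erase hi]

theorem esymmOn_update_zero {S : Finset ι} {i : ι} (hi : i ∈ S) (k : ℕ) (x : ι → R) :
    esymmOn S k (Function.update x i 0) = esymmOn (S.erase i) k x := by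
  have hcongr := esymmOn_congr (S := S.erase i) (x := Function.update x i 0) (y := x) fun j hj =>
    Function.update_of_ne (Finset.ne_of_mem_erase hj) _ _
  cases k with
  | zero => simp only [esymmOn_zero]
  | succ k =>
    rw [esymmOn_succ_eq_add_erase hi, Function.update_self, zero_mul, add_zero, hcongr]

theorem esymmDeriv_zero (S : Finset ι) (x y : ι → R) : esymmDeriv S 0 x y = ∑ i ∈ S, y i := by
  simp only [esymmDeriv, esymmOn_zero, mul_one]

theorem esymmDeriv_smul (S : Finset ι) (k : ℕ) (c : R) (x y : ι → R) :
    esymmDeriv S k (c • x) y = c ^ k * esymmDeriv S k x y := by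
  simp only [esymmDeriv, esymmOn_smul, Finset.mul_sum, mul_left_comm]

theorem esymmDeriv_add_smul (S : Finset ι) (k : ℕ) (x y z : ι → R) (c : R) :
    esymmDeriv S k x (y + c • z) = esymmDeriv S k x y + c * esymmDeriv S k x z := by
  simp only [esymmDeriv, Finset.mul_sum, ← Finset.sum_add_distrib, Pi.add_apply, Pi.smul_apply,
    smul_eq_mul, add_mul, mul_assoc]

theorem esymmDeriv_insert {S : Finset ι} {a : ι} (ha : a ∉ S) (k : ℕ) (x y : ι → R) :
    esymmDeriv (insert a S) (k + 1) x y =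
      esymmDeriv S (k + 1) x y + (y a * esymmOn S (k + 1) x + x a * esymmDeriv S k x y) := by
  have hterm : ∀ i ∈ S, y i * esymmOn ((insert a S).erase i) (k + 1) x =
      y i * esymmOn (S.erase i) (k + 1) x + x a * (y i * esymmOn (S.erase i) k x) := by
    intro i hi
    rw [Finset.erase_insert_of_ne (ne_of_mem_of_not_mem hi ha).symm,
      esymmOn_insert fun h => ha (Finset.mem_of_mem_erase h)]
    ring
  rw [esymmDeriv, Finset.sum_insert ha, Finset.erase_insert ha, Finset.sum_congr rfl hterm,
    Finset.sum_add_distrib, ← Finset.mul_sum, ← esymmDeriv, ← esymmDeriv]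
  ring

theorem esymmDeriv_indicator {S U : Finset ι} (hU : U ⊆ S) (y : ι → R) :
    esymmDeriv S U.card (fun i => if i ∈ U then 1 else 0) y = ∑ i ∈ S \ U, y i := by
  have hcoeff : ∀ i, esymmOn (S.erase i) U.card (fun i => if i ∈ U then (1 : R) else 0) =
      if i ∈ U then 0 else 1 := fun i => by
    rw [esymmOn_indicator, Finset.erase_inter, Finset.inter_eq_right.2 hU]
    split_ifs with hi
    · rw [Nat.choose_eq_zero_of_lt (Finset.card_erase_lt_of_mem hi), Nat.cast_zero]
    · rw [Finset.erase_eq_of_notMem hi, Nat.choose_self, Nat.cast_one]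
  simp only [esymmDeriv, hcoeff, mul_ite, mul_zero, mul_one, Finset.sum_ite,
    Finset.sum_const_zero, zero_add, Finset.filter_notMem_eq_sdiff]

theorem continuous_esymmDeriv_left [TopologicalSpace R] [IsTopologicalSemiring R] (S : Finset ι)
    (k : ℕ) (y : ι → R) : Continuous fun x => esymmDeriv S k x y :=
  continuous_finsetSum _ fun _ _ => (continuous_esymmOn _ _).const_mul _

theorem continuous_esymmDeriv_right [TopologicalSpace R] [IsTopologicalSemiring R] (S : Finset ι)
    (k : ℕ) (x : ι → R) : Continuous (esymmDeriv S k x) := by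
  unfold esymmDeriv
  fun_prop

end ElementarySymmetric

section ElementarySymmetricRing

variable {ι : Type*}

theorem esymmDeriv_const_one [DecidableEq ι] {R : Type*} [CommRing R] (S : Finset ι) (k : ℕ)
    (x : ι → R) :
    esymmDeriv S k x 1 = (S.card - k) * esymmOn S k x := by
  simp only [esymmDeriv, esymmOn, Pi.one_apply, one_mul]
  rw [Finset.sum_comm' (t' := S.powersetCard k) (s' := fun s => S \ s), Finset.mul_sum]
  · refine Finset.sum_congr rfl fun s hs => ?_
    obtain ⟨hsS, hcard⟩ := Finset.mem_powersetCard.1 hs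
    rw [Finset.sum_const, nsmul_eq_mul, Finset.card_sdiff_of_subset hsS,
      Nat.cast_sub (Finset.card_le_card hsS), hcard]
  · intro i s
    simp only [Finset.mem_powersetCard, Finset.mem_sdiff, Finset.subset_erase]
    tauto

theorem esymmDeriv_self [DecidableEq ι] {R : Type*} [CommRing R] (S : Finset ι) (k : ℕ)
    (x : ι → R) :
    esymmDeriv S k x x = (k + 1) * esymmOn S (k + 1) x := by
  have hterm : ∀ i ∈ S, x i * esymmOn (S.erase i) k x =
      esymmOn S (k + 1) x - 1 * esymmOn (S.erase i) (k + 1) x := fun i hi => by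
    rw [esymmOn_succ_eq_add_erase hi]
    ring
  have hone := esymmDeriv_const_one S (k + 1) x
  simp only [esymmDeriv, Pi.one_apply] at hone ⊢
  rw [Finset.sum_congr rfl hterm, Finset.sum_sub_distrib, hone, Finset.sum_const, nsmul_eq_mul]
  push_cast
  ring

theorem hasDerivAt_esymmOn_line [DecidableEq ι] {𝕜 : Type*} [NontriviallyNormedField 𝕜]
    (S : Finset ι) (k : ℕ) (x v : ι → 𝕜) (t : 𝕜) :
    HasDerivAt (fun t => esymmOn S (k + 1) (x + t • v)) (esymmDeriv S k (x + t • v) v) t := by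
  have hcoord (i : ι) : HasDerivAt (fun t => (x + t • v) i) (v i) t := by
    simpa using! ((hasDerivAt_id t).mul_const (v i)).const_add (x i)
  induction S using Finset.induction_on generalizing k with
  | empty =>
    simp only [esymmOn_eq_zero_of_card_lt (Finset.card_empty.trans_lt k.succ_pos), esymmDeriv,
      Finset.sum_empty]
    exact hasDerivAt_const t 0
  | insert a S ha ih =>
    cases k with
    | zero =>
      simp only [zero_add, esymmOn_one, esymmDeriv_zero]
      exact HasDerivAt.fun_sum fun i _ => hcoord i
    | succ k =>
      simp only [esymmOn_insert ha, esymmDeriv_insert ha]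
      exact (ih (k + 1)).add ((hcoord a).mul (ih k))

theorem newton_inequality (S : Finset ι) (k : ℕ) (x : ι → ℝ) :
    esymmOn S k x * esymmOn S (k + 2) x ≤ esymmOn S (k + 1) x ^ 2 := by
  rcases lt_or_ge S.card (k + 2) with hlt | hle
  · rw [esymmOn_eq_zero_of_card_lt hlt, mul_zero]
    positivity
  have hcoeff : ∀ j ≤ S.card,
      esymmOn S j x = (∏ i ∈ S, (Polynomial.X + Polynomial.C (x i))).coeff (S.card - j) := by
    intro j hj
    rw [Finset.prod_X_add_C_coeff S x (Nat.sub_le _ _), Nat.sub_sub_self hj, esymmOn]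
  have hsplits : (∏ i ∈ S, (Polynomial.X + Polynomial.C (x i))).Splits :=
    Polynomial.Splits.prod fun i _ => Polynomial.Splits.X_add_C (x i)
  have hcoeffs := coeff_mul_coeff_add_two_le_sq hsplits (S.card - (k + 2))
  rw [hcoeff k (by omega), hcoeff (k + 1) (by omega), hcoeff (k + 2) hle, mul_comm]
  rwa [show S.card - (k + 1) = S.card - (k + 2) + 1 by omega,
    show S.card - k = S.card - (k + 2) + 2 by omega]

end ElementarySymmetricRing

/-- The open Gårding cone `Γ_k` of the variables indexed by `S`. -/
def gardingCone {ι : Type*} (S : Finset ι) (k : ℕ) : Set (ι → ℝ) :=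
  {x | ∀ j, 1 ≤ j → j ≤ k → 0 < esymmOn S j x}

/-- The closure of the Gårding cone `Γ_k` for `k ≤ S.card`, encoded by the weak inequalities. -/
def closedGardingCone {ι : Type*} (S : Finset ι) (k : ℕ) : Set (ι → ℝ) :=
  {x | ∀ j, 1 ≤ j → j ≤ k → 0 ≤ esymmOn S j x}

section GardingCone

variable {ι : Type*} {S : Finset ι} {k j : ℕ} {x : ι → ℝ}

theorem esymmOn_pos (hx : x ∈ gardingCone S k) (hj : j ≤ k) : 0 < esymmOn S j x := by
  rcases j.eq_zero_or_pos with rfl | hj0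
  · simp only [esymmOn_zero, zero_lt_one]
  · exact hx j hj0 hj

theorem esymmOn_nonneg (hx : x ∈ closedGardingCone S k) (hj : j ≤ k) : 0 ≤ esymmOn S j x := by
  rcases j.eq_zero_or_pos with rfl | hj0
  · simp only [esymmOn_zero, zero_le_one]
  · exact hx j hj0 hj

theorem gardingCone_antitone (S : Finset ι) : Antitone (gardingCone S) :=
  fun _ _ hlk _ hx j hj0 hj => hx j hj0 (hj.trans hlk)

theorem closedGardingCone_antitone (S : Finset ι) : Antitone (closedGardingCone S) :=
  fun _ _ hlk _ hx j hj0 hj => hx j hj0 (hj.trans hlk)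

theorem gardingCone_subset_closedGardingCone (S : Finset ι) (k : ℕ) :
    gardingCone S k ⊆ closedGardingCone S k :=
  fun _ hx j hj0 hj => (hx j hj0 hj).le

theorem mem_gardingCone_succ_iff :
    x ∈ gardingCone S (k + 1) ↔ x ∈ gardingCone S k ∧ 0 < esymmOn S (k + 1) x := by
  refine ⟨fun hx => ⟨gardingCone_antitone S k.le_succ hx, esymmOn_pos hx le_rfl⟩, ?_⟩
  rintro ⟨hx, hpos⟩ j hj0 hj
  rcases hj.lt_or_eq with hlt | rfl
  · exact hx j hj0 (Nat.lt_succ_iff.1 hlt)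
  · exact hpos

theorem mem_closedGardingCone_of_nonneg (hx : ∀ i ∈ S, 0 ≤ x i) (k : ℕ) :
    x ∈ closedGardingCone S k :=
  fun _ _ _ => Finset.sum_nonneg fun _ hs => Finset.prod_nonneg fun i hi =>
    hx i ((Finset.mem_powersetCard.1 hs).1 hi)

theorem isOpen_gardingCone (S : Finset ι) (k : ℕ) : IsOpen (gardingCone S k) := by
  induction k with
  | zero =>
    convert isOpen_univ
    exact Set.eq_univ_of_forall fun x j hj0 hj => by omega
  | succ k ih =>
    have hsucc : gardingCone S (k + 1) = gardingCone S k ∩ {x | 0 < esymmOn S (k + 1) x} :=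
      Set.ext fun _ => mem_gardingCone_succ_iff
    exact hsucc ▸ ih.inter (isOpen_lt continuous_const (continuous_esymmOn S _))

theorem isClosed_closedGardingCone (S : Finset ι) (k : ℕ) : IsClosed (closedGardingCone S k) := by
  simp only [closedGardingCone, Set.ofPred_forall]
  exact isClosed_iInter fun j => isClosed_iInter fun _ => isClosed_iInter fun _ =>
    isClosed_le continuous_const (continuous_esymmOn S j)

theorem smul_mem_gardingCone {c : ℝ} (hc : 0 < c) (hx : x ∈ gardingCone S k) :
    c • x ∈ gardingCone S k := fun j hj0 hj => by
  rw [esymmOn_smul]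
  exact mul_pos (pow_pos hc j) (hx j hj0 hj)

theorem add_smul_one_mem_gardingCone (hk : k ≤ S.card) (hx : x ∈ closedGardingCone S k) {t : ℝ}
    (ht : 0 < t) : x + t • (1 : ι → ℝ) ∈ gardingCone S k := by
  classical
  induction k generalizing t with
  | zero => exact fun j hj0 hj => by omega
  | succ k ih =>
    have hcone : ∀ s : ℝ, 0 < s → x + s • (1 : ι → ℝ) ∈ gardingCone S k := fun s =>
      ih (Nat.le_of_succ_le hk) (closedGardingCone_antitone S k.le_succ hx)
    have hderiv := hasDerivAt_esymmOn_line S k x 1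
    have hmono : StrictMonoOn (fun s : ℝ => esymmOn S (k + 1) (x + s • 1)) (Set.Ici 0) := by
      refine strictMonoOn_of_deriv_pos (convex_Ici 0)
        (fun s _ => (hderiv s).continuousAt.continuousWithinAt) fun s hs => ?_
      rw [interior_Ici] at hs
      rw [(hderiv s).deriv, esymmDeriv_const_one]
      exact mul_pos (sub_pos.2 (Nat.cast_lt.2 hk)) (esymmOn_pos (hcone s hs) le_rfl)
    have hlt := hmono Set.self_mem_Ici ht.le ht
    simp only [zero_smul, add_zero] at hlt
    exact mem_gardingCone_succ_iff.2 ⟨hcone t ht, (esymmOn_nonneg hx le_rfl).trans_lt hlt⟩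

theorem tendsto_add_smul_one (x : ι → ℝ) :
    Filter.Tendsto (fun t : ℝ => x + t • (1 : ι → ℝ)) (nhdsWithin 0 (Set.Ioi 0)) (nhds x) := by
  have hcont : Continuous fun t : ℝ => x + t • (1 : ι → ℝ) := by fun_prop
  simpa only [zero_smul, add_zero] using (hcont.tendsto 0).mono_left nhdsWithin_le_nhds

theorem mem_gardingCone_erase [DecidableEq ι] {i : ι} (hi : i ∈ S)
    (hx : x ∈ gardingCone S (k + 1)) : x ∈ gardingCone (S.erase i) k := by
  induction k with
  | zero => exact fun j hj0 hj => by omega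
  | succ k ih =>
    have hcone := ih (gardingCone_antitone S (k + 1).le_succ hx)
    refine mem_gardingCone_succ_iff.2 ⟨hcone, not_le.1 fun hnonpos => ?_⟩
    have hpos := esymmOn_pos hcone le_rfl
    have hsucc := esymmOn_pos hx (k + 1).le_succ
    have hsucc_succ := esymmOn_pos hx le_rfl
    have newton := newton_inequality (S.erase i) k x
    rw [esymmOn_succ_eq_add_erase hi] at hsucc hsucc_succ
    nlinarith [mul_pos hpos hsucc_succ, mul_nonneg (neg_nonneg.2 hnonpos) hsucc.le]

theorem mem_closedGardingCone_erase [DecidableEq ι] {i : ι} (hk : k + 1 ≤ S.card) (hi : i ∈ S)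
    (hx : x ∈ closedGardingCone S (k + 1)) : x ∈ closedGardingCone (S.erase i) k := by
  refine (isClosed_closedGardingCone _ _).mem_of_tendsto (tendsto_add_smul_one x) ?_
  filter_upwards [self_mem_nhdsWithin] with t ht
  exact gardingCone_subset_closedGardingCone _ _
    (mem_gardingCone_erase hi (add_smul_one_mem_gardingCone hk hx ht))

theorem esymmOn_pos_of_pos_coords {T : Finset ι} (hk : k + 1 ≤ S.card)
    (hx : x ∈ closedGardingCone S (k + 1)) (hTS : T ⊆ S) (hkT : k ≤ T.card)
    (hT : ∀ i ∈ T, 0 < x i) : 0 < esymmOn S k x := by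
  classical
  induction k generalizing S T with
  | zero => simp only [esymmOn_zero, zero_lt_one]
  | succ k ih =>
    obtain ⟨i, hi⟩ := Finset.card_pos.1 (k.succ_pos.trans_le hkT)
    have hxi := mem_closedGardingCone_erase hk (hTS hi) hx
    rw [esymmOn_succ_eq_add_erase (hTS hi)]
    refine add_pos_of_nonneg_of_pos (esymmOn_nonneg hxi le_rfl) (mul_pos (hT i hi) ?_)
    refine ih ?_ hxi (Finset.erase_subset_erase i hTS) ?_
      fun j hj => hT j (Finset.mem_of_mem_erase hj)
    · rw [Finset.card_erase_of_mem (hTS hi)]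
      omega
    · rw [Finset.card_erase_of_mem hi]
      omega

end GardingCone

/-- The quotient `σ_{k+1} / σ_k`, whose superadditivity on `Γ_{k+1}` is the theorem of Marcus and
Lopes. -/
noncomputable def esymmRatio {ι : Type*} (S : Finset ι) (k : ℕ) (x : ι → ℝ) : ℝ :=
  esymmOn S (k + 1) x / esymmOn S k x

section EsymmRatio

variable {ι : Type*} {S : Finset ι} {k : ℕ} {x y : ι → ℝ}

theorem esymmRatio_pos {j : ℕ} (hx : x ∈ gardingCone S k) (hj : j < k) : 0 < esymmRatio S j x :=
  div_pos (esymmOn_pos hx hj) (esymmOn_pos hx hj.le)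

theorem esymmRatio_pos_iff (hx : x ∈ gardingCone S k) :
    0 < esymmRatio S k x ↔ x ∈ gardingCone S (k + 1) := by
  rw [esymmRatio, div_pos_iff_of_pos_right (esymmOn_pos hx le_rfl), mem_gardingCone_succ_iff,
    and_iff_right hx]

theorem add_mem_gardingCone_succ (hx : x ∈ gardingCone S (k + 1))
    (hy : y ∈ gardingCone S (k + 1)) (hxy : x + y ∈ gardingCone S k)
    (hle : esymmRatio S k x + esymmRatio S k y ≤ esymmRatio S k (x + y)) :
    x + y ∈ gardingCone S (k + 1) :=
  (esymmRatio_pos_iff hxy).1 <|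
    (add_pos (esymmRatio_pos hx k.lt_succ_self) (esymmRatio_pos hy k.lt_succ_self)).trans_le hle

theorem esymmRatio_smul (S : Finset ι) (k : ℕ) {c : ℝ} (hc : c ≠ 0) (x : ι → ℝ) :
    esymmRatio S k (c • x) = c * esymmRatio S k x := by
  rw [esymmRatio, esymmRatio, esymmOn_smul, esymmOn_smul, pow_succ', mul_assoc, mul_div_assoc,
    mul_div_mul_left _ _ (pow_ne_zero k hc)]

theorem prod_range_esymmRatio (hx : x ∈ gardingCone S k) :
    ∏ j ∈ Finset.range k, esymmRatio S j x = esymmOn S k x := by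
  induction k with
  | zero => simp only [Finset.range_zero, Finset.prod_empty, esymmOn_zero]
  | succ k ih =>
    rw [Finset.prod_range_succ, ih (gardingCone_antitone S k.le_succ hx), esymmRatio,
      mul_div_cancel₀ _ (esymmOn_pos hx k.le_succ).ne']

theorem harmonic_sum_superadditive {x y a b c : ℝ} (hx : 0 < x + a) (hy : 0 < y + b)
    (hc : a + b ≤ c) :
    x * a / (x + a) + y * b / (y + b) ≤ (x + y) * c / (x + y + c) := by
  have hxyc : 0 < x + y + c := by linarith
  have harmonic_eq : ∀ u v : ℝ, 0 < u + v → u * v / (u + v) = u - u ^ 2 / (u + v) := by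
    intro u v huv
    rw [eq_sub_iff_add_eq, ← add_div, div_eq_iff huv.ne']
    ring
  have cauchy : (x + y) ^ 2 / ((x + a) + (y + b)) ≤ x ^ 2 / (x + a) + y ^ 2 / (y + b) :=
    by simpa [Fin.sum_univ_two] using
      Finset.sq_sum_div_le_sum_sq_div Finset.univ ![x, y] (g := ![x + a, y + b])
        (by simp [Fin.forall_fin_two, hx, hy])
  have hle : (x + y) ^ 2 / (x + y + c) ≤ (x + y) ^ 2 / ((x + a) + (y + b)) :=
    div_le_div_of_nonneg_left (sq_nonneg _) (add_pos hx hy) (by linarith)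
  rw [harmonic_eq _ _ hx, harmonic_eq _ _ hy, harmonic_eq _ _ hxyc]
  linarith

variable [DecidableEq ι] {i : ι}

theorem add_esymmRatio_erase (hi : i ∈ S) (hx : x ∈ gardingCone S (k + 1)) :
    x i + esymmRatio (S.erase i) k x = esymmOn S (k + 1) x / esymmOn (S.erase i) k x := by
  rw [esymmOn_succ_eq_add_erase hi, add_div, esymmRatio, add_comm,
    mul_div_cancel_right₀ _ (esymmOn_pos (mem_gardingCone_erase hi hx) le_rfl).ne']

theorem add_esymmRatio_erase_pos (hi : i ∈ S) (hx : x ∈ gardingCone S (k + 1)) :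
    0 < x i + esymmRatio (S.erase i) k x := by
  rw [add_esymmRatio_erase hi hx]
  exact div_pos (esymmOn_pos hx le_rfl) (esymmOn_pos (mem_gardingCone_erase hi hx) le_rfl)

theorem esymmRatio_succ_eq_sum (hx : x ∈ gardingCone S (k + 1)) :
    esymmRatio S (k + 1) x =
      (∑ i ∈ S, x i * esymmRatio (S.erase i) k x / (x i + esymmRatio (S.erase i) k x)) /
        (k + 2) := by
  have hterm : ∀ i ∈ S, x i * esymmRatio (S.erase i) k x / (x i + esymmRatio (S.erase i) k x) =
      x i * esymmOn (S.erase i) (k + 1) x / esymmOn S (k + 1) x := fun i hi => by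
    rw [add_esymmRatio_erase hi hx, esymmRatio, ← mul_div_assoc,
      div_div_div_cancel_right₀ (esymmOn_pos (mem_gardingCone_erase hi hx) le_rfl).ne']
  rw [Finset.sum_congr rfl hterm, ← Finset.sum_div, ← esymmDeriv, esymmDeriv_self, esymmRatio,
    div_right_comm, Nat.cast_add_one, add_assoc (k : ℝ), one_add_one_eq_two,
    mul_div_cancel_left₀ _ (by positivity)]

theorem esymmRatio_succ_add_le (hx : x ∈ gardingCone S (k + 1)) (hy : y ∈ gardingCone S (k + 1))
    (hxy : x + y ∈ gardingCone S (k + 1))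
    (hle : ∀ i ∈ S, esymmRatio (S.erase i) k x + esymmRatio (S.erase i) k y ≤
      esymmRatio (S.erase i) k (x + y)) :
    esymmRatio S (k + 1) x + esymmRatio S (k + 1) y ≤ esymmRatio S (k + 1) (x + y) := by
  rw [esymmRatio_succ_eq_sum hx, esymmRatio_succ_eq_sum hy, esymmRatio_succ_eq_sum hxy, ← add_div,
    ← Finset.sum_add_distrib]
  gcongr with i hi
  exact harmonic_sum_superadditive (add_esymmRatio_erase_pos hi hx)
    (add_esymmRatio_erase_pos hi hy) (hle i hi)

end EsymmRatio

section GardingInequality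

variable {ι : Type*} {S : Finset ι} {k : ℕ} {x y : ι → ℝ}

theorem add_mem_gardingCone_and_esymmRatio_add_le (hx : x ∈ gardingCone S (k + 1))
    (hy : y ∈ gardingCone S (k + 1)) :
    x + y ∈ gardingCone S (k + 1) ∧
      esymmRatio S k x + esymmRatio S k y ≤ esymmRatio S k (x + y) := by
  classical
  induction k generalizing S with
  | zero =>
    have hle : esymmRatio S 0 x + esymmRatio S 0 y ≤ esymmRatio S 0 (x + y) := by
      simp only [esymmRatio, zero_add, esymmOn_zero, esymmOn_one, div_one, Pi.add_apply,
        Finset.sum_add_distrib, le_refl]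
    exact ⟨add_mem_gardingCone_succ hx hy (fun j hj0 hj => by omega) hle, hle⟩
  | succ k ih =>
    have hxk := gardingCone_antitone S (k + 1).le_succ hx
    have hyk := gardingCone_antitone S (k + 1).le_succ hy
    have hxy := (ih hxk hyk).1
    have hle := esymmRatio_succ_add_le hxk hyk hxy fun i hi =>
      (ih (mem_gardingCone_erase hi hx) (mem_gardingCone_erase hi hy)).2
    exact ⟨add_mem_gardingCone_succ hx hy hxy hle, hle⟩

theorem add_mem_gardingCone (hx : x ∈ gardingCone S k) (hy : y ∈ gardingCone S k) :
    x + y ∈ gardingCone S k := by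
  cases k with
  | zero => exact fun j hj0 hj => by omega
  | succ k => exact (add_mem_gardingCone_and_esymmRatio_add_le hx hy).1

theorem esymmRatio_add_le {j : ℕ} (hx : x ∈ gardingCone S k) (hy : y ∈ gardingCone S k)
    (hj : j < k) : esymmRatio S j x + esymmRatio S j y ≤ esymmRatio S j (x + y) :=
  (add_mem_gardingCone_and_esymmRatio_add_le (gardingCone_antitone S hj hx)
    (gardingCone_antitone S hj hy)).2

theorem one_add_sum_le_prod_one_add {R : Type*} [CommSemiring R] [PartialOrder R]
    [IsOrderedRing R] {f : ι → R} {s : Finset ι} (hf : ∀ i ∈ s, 0 ≤ f i) :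
    1 + ∑ i ∈ s, f i ≤ ∏ i ∈ s, (1 + f i) := by
  classical
  induction s using Finset.induction_on with
  | empty => simp
  | insert a s ha ih =>
    have hfa := hf a (Finset.mem_insert_self a s)
    have hfs := fun i hi => hf i (Finset.mem_insert_of_mem hi)
    rw [Finset.sum_insert ha, Finset.prod_insert ha]
    calc 1 + (f a + ∑ i ∈ s, f i) ≤ 1 + (f a + ∑ i ∈ s, f i) + f a * ∑ i ∈ s, f i :=
          le_add_of_nonneg_right (mul_nonneg hfa (Finset.sum_nonneg hfs))
      _ = (1 + f a) * (1 + ∑ i ∈ s, f i) := by ring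
      _ ≤ (1 + f a) * ∏ i ∈ s, (1 + f i) :=
          mul_le_mul_of_nonneg_left (ih hfs) (add_nonneg zero_le_one hfa)

theorem esymmOn_mul_one_add_le (hx : x ∈ gardingCone S k) (hy : y ∈ gardingCone S k) {s : ℝ}
    (hs : 0 < s) :
    esymmOn S k x * (1 + s * ∑ j ∈ Finset.range k, esymmRatio S j y / esymmRatio S j x) ≤
      esymmOn S k (x + s • y) := by
  have hsy := smul_mem_gardingCone hs hy
  have hxpos : ∀ j ∈ Finset.range k, 0 < esymmRatio S j x :=
    fun j hj => esymmRatio_pos hx (Finset.mem_range.1 hj)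
  have hypos : ∀ j ∈ Finset.range k, 0 < esymmRatio S j y :=
    fun j hj => esymmRatio_pos hy (Finset.mem_range.1 hj)
  rw [Finset.mul_sum, ← prod_range_esymmRatio hx,
    ← prod_range_esymmRatio (add_mem_gardingCone hx hsy)]
  calc (∏ j ∈ Finset.range k, esymmRatio S j x) *
        (1 + ∑ j ∈ Finset.range k, s * (esymmRatio S j y / esymmRatio S j x))
      ≤ (∏ j ∈ Finset.range k, esymmRatio S j x) *
        ∏ j ∈ Finset.range k, (1 + s * (esymmRatio S j y / esymmRatio S j x)) :=
        mul_le_mul_of_nonneg_left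
          (one_add_sum_le_prod_one_add fun j hj =>
            mul_nonneg hs.le (div_pos (hypos j hj) (hxpos j hj)).le)
          (Finset.prod_nonneg fun j hj => (hxpos j hj).le)
    _ = ∏ j ∈ Finset.range k, (esymmRatio S j x + esymmRatio S j (s • y)) := by
        rw [← Finset.prod_mul_distrib]
        refine Finset.prod_congr rfl fun j hj => ?_
        rw [esymmRatio_smul S j hs.ne', mul_add, mul_one, mul_left_comm,
          mul_div_cancel₀ _ (hxpos j hj).ne']
    _ ≤ ∏ j ∈ Finset.range k, esymmRatio S j (x + s • y) :=
        Finset.prod_le_prod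
          (fun j hj => (add_pos (hxpos j hj) (esymmRatio_pos hsy (Finset.mem_range.1 hj))).le)
          fun j hj => esymmRatio_add_le hx hsy (Finset.mem_range.1 hj)

variable [DecidableEq ι]

theorem esymmOn_mul_sum_div_le_esymmDeriv (hx : x ∈ gardingCone S (k + 1))
    (hy : y ∈ gardingCone S (k + 1)) :
    esymmOn S (k + 1) x * ∑ j ∈ Finset.range (k + 1), esymmRatio S j y / esymmRatio S j x ≤
      esymmDeriv S k x y := by
  have hslope := (hasDerivAt_esymmOn_line S k x y 0).tendsto_slope_zero_right
  simp only [zero_add, zero_smul, add_zero, smul_eq_mul] at hslope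
  refine ge_of_tendsto hslope ?_
  filter_upwards [self_mem_nhdsWithin] with s hs
  rw [inv_mul_eq_div, le_div_iff₀ hs]
  linarith [esymmOn_mul_one_add_le hx hy hs]

theorem garding_inequality_of_mem_gardingCone (hx : x ∈ gardingCone S (k + 1))
    (hy : y ∈ gardingCone S (k + 1)) :
    esymmOn S (k + 1) x *
        ((k + 1) * (esymmOn S (k + 1) y / esymmOn S (k + 1) x) ^ (1 / ((k : ℝ) + 1))) ≤
      esymmDeriv S k x y := by
  have hratio : ∀ j ∈ Finset.range (k + 1), 0 ≤ esymmRatio S j y / esymmRatio S j x :=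
    fun j hj => (div_pos (esymmRatio_pos hy (Finset.mem_range.1 hj))
      (esymmRatio_pos hx (Finset.mem_range.1 hj))).le
  have am_gm := Real.geom_mean_le_arith_mean (Finset.range (k + 1)) (fun _ => 1) _
    (fun _ _ => zero_le_one) (by simp [k.cast_add_one_pos]) hratio
  simp only [Real.rpow_one, Finset.sum_const, Finset.card_range, nsmul_eq_mul, mul_one, one_mul,
    Finset.prod_div_distrib, prod_range_esymmRatio hx, prod_range_esymmRatio hy, Nat.cast_add_one,
    ← one_div] at am_gm
  rw [le_div_iff₀' (by positivity)] at am_gm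
  exact (mul_le_mul_of_nonneg_left am_gm (esymmOn_pos hx le_rfl).le).trans
    (esymmOn_mul_sum_div_le_esymmDeriv hx hy)

theorem garding_inequality (hk : k + 1 ≤ S.card) (hx : x ∈ gardingCone S (k + 1))
    (hy : y ∈ closedGardingCone S (k + 1)) :
    esymmOn S (k + 1) x *
        ((k + 1) * (esymmOn S (k + 1) y / esymmOn S (k + 1) x) ^ (1 / ((k : ℝ) + 1))) ≤
      esymmDeriv S k x y := by
  have hpow : (0 : ℝ) ≤ 1 / ((k : ℝ) + 1) := by positivity
  have hcont : Continuous fun z => esymmOn S (k + 1) x *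
      ((k + 1) * (esymmOn S (k + 1) z / esymmOn S (k + 1) x) ^ (1 / ((k : ℝ) + 1))) :=
    ((((continuous_esymmOn S _).div_const _).rpow_const fun _ => Or.inr hpow).const_mul
      _).const_mul _
  refine le_of_tendsto_of_tendsto ((hcont.tendsto y).comp (tendsto_add_smul_one y))
    (((continuous_esymmDeriv_right S k x).tendsto y).comp (tendsto_add_smul_one y)) ?_
  filter_upwards [self_mem_nhdsWithin] with t ht
  exact garding_inequality_of_mem_gardingCone hx (add_smul_one_mem_gardingCone hk hy ht)

end GardingInequality

/-- The hypersurface `σ_k = 1` in the Gårding cone `Γ_k`, over which the extremal problem runs. -/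
def gardingLevelSet {ι : Type*} (S : Finset ι) (k : ℕ) : Set (ι → ℝ) :=
  {x ∈ gardingCone S k | esymmOn S k x = 1}

section Extremal

open Filter Topology

variable {ι : Type*} {S : Finset ι} {k : ℕ} {x y : ι → ℝ}

theorem rpow_one_div_add_one_pow {a : ℝ} (ha : 0 ≤ a) (k : ℕ) :
    (a ^ (1 / ((k : ℝ) + 1))) ^ (k + 1) = a := by
  rw [one_div, ← Nat.cast_add_one, Real.rpow_inv_natCast_pow ha k.succ_ne_zero]

theorem normalize_mem_gardingLevelSet (hx : x ∈ gardingCone S (k + 1)) :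
    (esymmOn S (k + 1) x ^ (1 / ((k : ℝ) + 1)))⁻¹ • x ∈ gardingLevelSet S (k + 1) := by
  have hpos := esymmOn_pos hx le_rfl
  refine ⟨smul_mem_gardingCone (inv_pos.2 (Real.rpow_pos_of_pos hpos _)) hx, ?_⟩
  rw [esymmOn_smul, inv_pow, rpow_one_div_add_one_pow hpos.le, inv_mul_cancel₀ hpos.ne']

theorem iInf_esymmDeriv_le [DecidableEq ι] (hx : x ∈ gardingCone S (k + 1)) (y : ι → ℝ) :
    ⨅ z ∈ gardingLevelSet S (k + 1), ((esymmDeriv S k z y : ℝ) : EReal) ≤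
      (((esymmOn S (k + 1) x ^ (1 / ((k : ℝ) + 1)))⁻¹ ^ k * esymmDeriv S k x y : ℝ) : EReal) := by
  rw [← esymmDeriv_smul]
  exact iInf₂_le _ (normalize_mem_gardingLevelSet hx)

theorem esymmDeriv_add_smul_one_le [DecidableEq ι] {t : ℝ} (hk : k ≤ S.card) (ht : 0 ≤ t)
    (hx : y + t • (1 : ι → ℝ) ∈ gardingCone S k) :
    esymmDeriv S k (y + t • 1) y ≤ (k + 1) * esymmOn S (k + 1) (y + t • 1) := by
  rw [← esymmDeriv_self, esymmDeriv_add_smul, esymmDeriv_const_one]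
  exact le_add_of_nonneg_right (mul_nonneg ht (mul_nonneg (sub_nonneg.2 (Nat.cast_le.2 hk))
    (esymmOn_pos hx le_rfl).le))

theorem iInf_esymmDeriv_eq [DecidableEq ι] (hk : k + 1 ≤ S.card)
    (hy : y ∈ closedGardingCone S (k + 1)) :
    ⨅ z ∈ gardingLevelSet S (k + 1), ((esymmDeriv S k z y : ℝ) : EReal) =
      (((k + 1) * esymmOn S (k + 1) y ^ (1 / ((k : ℝ) + 1)) : ℝ) : EReal) := by
  have hpow : (0 : ℝ) ≤ 1 / ((k : ℝ) + 1) := by positivity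
  refine le_antisymm ?_ (le_iInf₂ fun z hz => EReal.coe_le_coe_iff.2 ?_)
  · have hcont : Continuous fun z => ((((k : ℝ) + 1) *
        esymmOn S (k + 1) z ^ (1 / ((k : ℝ) + 1)) : ℝ) : EReal) :=
      continuous_coe_real_ereal.comp
        (((continuous_esymmOn S _).rpow_const fun _ => Or.inr hpow).const_mul _)
    refine ge_of_tendsto ((hcont.tendsto y).comp (tendsto_add_smul_one y)) ?_
    filter_upwards [self_mem_nhdsWithin] with t (ht : 0 < t)
    have hx := add_smul_one_mem_gardingCone hk hy ht
    refine (iInf_esymmDeriv_le hx y).trans (EReal.coe_le_coe_iff.2 ?_)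
    set x := y + t • (1 : ι → ℝ)
    have hpos := esymmOn_pos hx le_rfl
    have hself := esymmDeriv_add_smul_one_le (Nat.le_of_succ_le hk) ht.le
      (gardingCone_antitone S k.le_succ hx)
    rw [← rpow_one_div_add_one_pow hpos.le k] at hself
    set r := esymmOn S (k + 1) x ^ (1 / ((k : ℝ) + 1))
    have hrpos : 0 < r := Real.rpow_pos_of_pos hpos _
    calc r⁻¹ ^ k * esymmDeriv S k x y ≤ r⁻¹ ^ k * ((k + 1) * r ^ (k + 1)) :=
          mul_le_mul_of_nonneg_left hself (by positivity)
      _ = (k + 1) * r := by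
          rw [mul_left_comm, inv_pow, pow_succ, inv_mul_cancel_left₀ (pow_ne_zero k hrpos.ne')]
  · simpa only [hz.2, one_mul, div_one] using garding_inequality hk hz.1 hy

theorem exists_indicator_esymmDeriv_neg [DecidableEq ι] (hk : k + 1 ≤ S.card)
    (hy : (S.filter fun i => 0 ≤ y i).card ≤ k) :
    ∃ x ∈ closedGardingCone S (k + 1), esymmOn S (k + 1) x = 0 ∧ esymmDeriv S k x y < 0 := by
  obtain ⟨U, hyU, hUS, rfl⟩ :=
    Finset.exists_subsuperset_card_eq (Finset.filter_subset _ S) hy (Nat.le_of_succ_le hk)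
  refine ⟨fun i => if i ∈ U then 1 else 0,
    mem_closedGardingCone_of_nonneg (fun i _ => by split_ifs <;> norm_num) _, ?_, ?_⟩
  · rw [esymmOn_indicator, Finset.inter_eq_right.2 hUS, Nat.choose_succ_self, Nat.cast_zero]
  · rw [esymmDeriv_indicator hUS]
    refine Finset.sum_neg (fun i hi => not_le.1 fun hyi => ?_)
      (Finset.card_pos.1 (by rw [Finset.card_sdiff_of_subset hUS]; omega))
    obtain ⟨hiS, hiU⟩ := Finset.mem_sdiff.1 hi
    exact hiU (hyU (Finset.mem_filter.2 ⟨hiS, hyi⟩))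

theorem exists_add_smul_one_mem_boundary (hk : k ≤ S.card) (hy : y ∉ closedGardingCone S k) :
    ∃ t : ℝ, 0 < t ∧ y + t • (1 : ι → ℝ) ∈ closedGardingCone S k \ gardingCone S k := by
  have hcont : Continuous fun t : ℝ => y + t • (1 : ι → ℝ) := by fun_prop
  set V : Set ℝ := (fun t : ℝ => y + t • (1 : ι → ℝ)) ⁻¹' closedGardingCone S k
  have hVclosed : IsClosed V := (isClosed_closedGardingCone S k).preimage hcont
  have hzero : (0 : ℝ) ∉ V := by simpa [V] using hy
  have hnonempty : V.Nonempty := by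
    refine ⟨∑ i ∈ S, |y i|, mem_closedGardingCone_of_nonneg (fun i hi => ?_) k⟩
    have hle := Finset.single_le_sum (f := fun i => |y i|) (fun i _ => abs_nonneg _) hi
    simp only [Pi.add_apply, Pi.smul_apply, Pi.one_apply, smul_eq_mul, mul_one]
    linarith [neg_abs_le (y i)]
  obtain ⟨t, ht⟩ : (frontier V).Nonempty :=
    nonempty_frontier_iff.2 ⟨hnonempty, fun huniv => hzero (huniv ▸ Set.mem_univ 0)⟩
  rw [hVclosed.frontier_eq] at ht
  refine ⟨t, not_le.1 fun htle => ?_, ht.1, fun hopen => ht.2 ?_⟩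
  · rcases htle.lt_or_eq with hneg | rfl
    · refine hy (gardingCone_subset_closedGardingCone S k ?_)
      simpa using add_smul_one_mem_gardingCone hk ht.1 (neg_pos.2 hneg)
    · exact hzero ht.1
  · exact interior_mono (Set.preimage_mono (gardingCone_subset_closedGardingCone S k))
      (mem_interior_iff_mem_nhds.2 (((isOpen_gardingCone S k).preimage hcont).mem_nhds hopen))

theorem exists_esymmDeriv_neg [DecidableEq ι] (hk : k + 1 ≤ S.card)
    (hy : y ∉ closedGardingCone S (k + 1)) :
    ∃ x ∈ closedGardingCone S (k + 1), esymmOn S (k + 1) x = 0 ∧ esymmDeriv S k x y < 0 := by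
  rcases le_or_gt (S.filter fun i => 0 ≤ y i).card k with hcard | hcard
  · exact exists_indicator_esymmDeriv_neg hk hcard
  obtain ⟨t, ht, hclosed, hopen⟩ := exists_add_smul_one_mem_boundary hk hy
  set x := y + t • (1 : ι → ℝ) with hxdef
  have hpos : ∀ j ≤ k, 0 < esymmOn S j x := fun j hj => by
    refine esymmOn_pos_of_pos_coords (by omega)
      (closedGardingCone_antitone S (Nat.succ_le_succ hj) hclosed)
      (Finset.filter_subset (fun i => 0 ≤ y i) S) (by omega) fun i hi => ?_
    simpa [hxdef] using add_pos_of_nonneg_of_pos (Finset.mem_filter.1 hi).2 ht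
  have hzero : esymmOn S (k + 1) x = 0 :=
    ((esymmOn_nonneg hclosed le_rfl).eq_of_not_lt fun hlt =>
      hopen (mem_gardingCone_succ_iff.2 ⟨fun j _ hj => hpos j hj, hlt⟩)).symm
  refine ⟨x, hclosed, hzero, ?_⟩
  have hself := esymmDeriv_add_smul S k x y 1 t
  rw [← hxdef, esymmDeriv_self, hzero, mul_zero, esymmDeriv_const_one] at hself
  have hcoeff : (0 : ℝ) < S.card - k := sub_pos.2 (Nat.cast_lt.2 hk)
  linarith [mul_pos ht (mul_pos hcoeff (hpos k le_rfl))]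

theorem iInf_esymmDeriv_eq_bot [DecidableEq ι] (hk0 : k ≠ 0) (hk : k + 1 ≤ S.card)
    (hy : y ∉ closedGardingCone S (k + 1)) :
    ⨅ z ∈ gardingLevelSet S (k + 1), ((esymmDeriv S k z y : ℝ) : EReal) = ⊥ := by
  obtain ⟨x, hx, hx0, hneg⟩ := exists_esymmDeriv_neg hk hy
  have hpow : (0 : ℝ) < 1 / ((k : ℝ) + 1) := by positivity
  have hcone : ∀ᶠ t : ℝ in 𝓝[>] 0, x + t • (1 : ι → ℝ) ∈ gardingCone S (k + 1) := by
    filter_upwards [self_mem_nhdsWithin] with t ht using add_smul_one_mem_gardingCone hk hx ht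
  have hroot : Tendsto (fun t : ℝ => esymmOn S (k + 1) (x + t • (1 : ι → ℝ)) ^
      (1 / ((k : ℝ) + 1))) (𝓝[>] 0) (𝓝[>] 0) := by
    refine tendsto_nhdsWithin_iff.2 ⟨?_, hcone.mono fun t ht =>
      Real.rpow_pos_of_pos (esymmOn_pos ht le_rfl) _⟩
    have hcont := (continuous_esymmOn S (k + 1)).rpow_const (p := 1 / ((k : ℝ) + 1))
      fun _ => Or.inr hpow.le
    simpa only [hx0, Real.zero_rpow hpow.ne', Function.comp_def] using
      (hcont.tendsto x).comp (tendsto_add_smul_one x)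
  have hderiv := ((continuous_esymmDeriv_left S k y).tendsto x).comp (tendsto_add_smul_one x)
  have hbot := ((tendsto_pow_atTop hk0).comp (tendsto_inv_nhdsGT_zero.comp hroot)).atTop_mul_neg
    hneg hderiv
  exact le_bot_iff.1 (ge_of_tendsto (EReal.tendsto_coe_nhds_bot_iff.2 hbot)
    (hcone.mono fun t ht => iInf_esymmDeriv_le ht y))

end Extremal

section Marcus

open scoped ComplexOrder

theorem exists_perm_of_map_univ_eq {ι α : Type*} [Fintype ι] {f g : ι → α}
    (h : Finset.univ.val.map f = Finset.univ.val.map g) : ∃ e : Equiv.Perm ι, f = g ∘ e := by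
  classical
  have hfib (c : α) : Nonempty ({i // f i = c} ≃ {i // g i = c}) := by
    refine ⟨Fintype.equivOfCardEq ?_⟩
    have hcount := congrArg (Multiset.count c) h
    rw [Multiset.count_map, Multiset.count_map] at hcount
    rw [Fintype.card_subtype, Fintype.card_subtype, Finset.card_def, Finset.card_def]
    simpa only [Finset.filter_val, eq_comm] using hcount
  exact ⟨Equiv.ofFiberEquiv fun c => (hfib c).some,
    funext fun i => (Equiv.ofFiberEquiv_map (fun c => (hfib c).some) i).symm⟩

theorem trace_conjTranspose_mul_mul_self {ι R : Type*} [Fintype ι] [CommSemiring R] [StarRing R]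
    {A : Matrix ι ι R} (hA : A.IsHermitian) (M : Matrix ι ι R) :
    (Aᴴ * M * A).trace = (M * (A * A)).trace := by
  rw [hA.eq, mul_assoc, trace_mul_comm, mul_assoc]

variable {ι 𝕜 : Type*} [Fintype ι] [DecidableEq ι] [RCLike 𝕜]

theorem exists_perm_sum_le_of_mem_doublyStochastic {R : Type*} [Field R] [LinearOrder R]
    [IsStrictOrderedRing R] {Q : Matrix ι ι R} (hQ : Q ∈ doublyStochastic R ι) (c : Matrix ι ι R) :
    ∃ p : Equiv.Perm ι, ∑ i, c i (p i) ≤ ∑ i, ∑ j, c i j * Q i j := by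
  let f : Matrix ι ι R →ₗ[R] R := ∑ i, ∑ j, c i j • entryLinearMap R R i j
  have hf (P : Matrix ι ι R) : f P = ∑ i, ∑ j, c i j * P i j := by
    simp [f, LinearMap.sum_apply]
  have hQ' : Q ∈ convexHull R {σ.permMatrix R | σ : Equiv.Perm ι} := by
    rwa [← doublyStochastic_eq_convexHull_permMatrix]
  obtain ⟨_, ⟨p, rfl⟩, hp⟩ :=
    (f.concaveOn convex_univ).exists_le_of_mem_convexHull (Set.subset_univ _) hQ'
  refine ⟨p, ?_⟩
  simpa [hf, Equiv.Perm.permMatrix, PEquiv.toMatrix_apply, Equiv.toPEquiv_apply] using hp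

theorem norm_sq_mem_doublyStochastic (W : unitaryGroup ι 𝕜) :
    (of fun i j => ‖(W : Matrix ι ι 𝕜) i j‖ ^ 2) ∈ doublyStochastic ℝ ι := by
  refine mem_doublyStochastic_iff_sum.2 ⟨fun i j => sq_nonneg _, fun i => ?_, fun j => ?_⟩
  · have h := congrFun₂ (Unitary.coe_mul_star_self W) i i
    simp only [mul_apply, Unitary.coe_star, star_apply, RCLike.star_def, RCLike.mul_conj,
      one_apply_eq] at h
    exact_mod_cast h
  · have h := congrFun₂ (Unitary.coe_star_mul_self W) j j
    simp only [mul_apply, star_apply, RCLike.star_def, RCLike.conj_mul, one_apply_eq] at h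
    exact_mod_cast h

theorem trace_conjStarAlgAut (U : unitaryGroup ι 𝕜) (X : Matrix ι ι 𝕜) :
    (Unitary.conjStarAlgAut 𝕜 _ U X).trace = X.trace := by
  rw [Unitary.conjStarAlgAut_apply, trace_mul_cycle, Unitary.coe_star_mul_self, one_mul]

theorem trace_diagonal_mul_conjStarAlgAut_diagonal (W : unitaryGroup ι 𝕜) (d a : ι → ℝ) :
    (diagonal (RCLike.ofReal ∘ d) *
      Unitary.conjStarAlgAut 𝕜 _ W (diagonal (RCLike.ofReal ∘ a))).trace =
      ((∑ i, ∑ j, d i * a j * ‖(W : Matrix ι ι 𝕜) i j‖ ^ 2 : ℝ) : 𝕜) := by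
  push_cast
  refine Finset.sum_congr rfl fun i _ => ?_
  rw [diag_apply, diagonal_mul, Unitary.conjStarAlgAut_apply, mul_apply, Finset.mul_sum]
  refine Finset.sum_congr rfl fun j _ => ?_
  rw [mul_diagonal, star_apply, RCLike.star_def, ← RCLike.mul_conj]
  simp only [Function.comp_apply]
  ring

theorem exists_perm_sum_le_re_trace_conjStarAlgAut_mul (U V : unitaryGroup ι 𝕜) (d a : ι → ℝ) :
    ∃ p : Equiv.Perm ι, ∑ i, d i * a (p i) ≤
      RCLike.re (Unitary.conjStarAlgAut 𝕜 _ U (diagonal (RCLike.ofReal ∘ d)) *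
        Unitary.conjStarAlgAut 𝕜 _ V (diagonal (RCLike.ofReal ∘ a))).trace := by
  obtain ⟨p, hp⟩ := exists_perm_sum_le_of_mem_doublyStochastic
    (norm_sq_mem_doublyStochastic (star U * V)) (of fun i j => d i * a j)
  have hV (X : Matrix ι ι 𝕜) : Unitary.conjStarAlgAut 𝕜 _ V X =
      Unitary.conjStarAlgAut 𝕜 _ U (Unitary.conjStarAlgAut 𝕜 _ (star U * V) X) := by
    rw [← Unitary.conjStarAlgAut_mul_apply, ← mul_assoc, Unitary.mul_star_self, one_mul]
  refine ⟨p, ?_⟩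
  rwa [hV, ← map_mul, trace_conjStarAlgAut, trace_diagonal_mul_conjStarAlgAut_diagonal,
    RCLike.ofReal_re]

variable {M A : Matrix ι ι 𝕜}

theorem conjStarAlgAut_diagonal_mul_self (U : unitaryGroup ι 𝕜) (d : ι → ℝ) :
    Unitary.conjStarAlgAut 𝕜 _ U (diagonal (RCLike.ofReal ∘ d)) *
      Unitary.conjStarAlgAut 𝕜 _ U (diagonal (RCLike.ofReal ∘ d)) =
      Unitary.conjStarAlgAut 𝕜 _ U (diagonal (RCLike.ofReal ∘ fun i => d i ^ 2)) := by
  rw [← map_mul, diagonal_mul_diagonal]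
  simp [Function.comp_def, sq]

theorem exists_perm_sum_eigenvalues_mul_sq_le_re_trace (hM : M.IsHermitian) (hA : A.IsHermitian) :
    ∃ p : Equiv.Perm ι, ∑ i, hM.eigenvalues i * hA.eigenvalues (p i) ^ 2 ≤
      RCLike.re (Aᴴ * M * A).trace := by
  have hAA := conjStarAlgAut_diagonal_mul_self hA.eigenvectorUnitary hA.eigenvalues
  rw [← hA.spectral_theorem] at hAA
  rw [trace_conjTranspose_mul_mul_self hA, hAA]
  obtain ⟨p, hp⟩ := exists_perm_sum_le_re_trace_conjStarAlgAut_mul hM.eigenvectorUnitary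
    hA.eigenvectorUnitary hM.eigenvalues fun i => hA.eigenvalues i ^ 2
  rw [← hM.spectral_theorem] at hp
  exact ⟨p, hp⟩

theorem exists_perm_eigenvalues_conjStarAlgAut_diagonal (U : unitaryGroup ι 𝕜) (d : ι → ℝ)
    (hA : (Unitary.conjStarAlgAut 𝕜 _ U (diagonal (RCLike.ofReal ∘ d))).IsHermitian) :
    ∃ e : Equiv.Perm ι, hA.eigenvalues = d ∘ e := by
  have hroots : (Unitary.conjStarAlgAut 𝕜 _ U (diagonal (RCLike.ofReal ∘ d))).charpoly.roots =
      Finset.univ.val.map (RCLike.ofReal ∘ d) := by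
    rw [Unitary.conjStarAlgAut_apply, charpoly_mul_comm, ← mul_assoc, Unitary.coe_star_mul_self,
      one_mul, charpoly_diagonal,
      Polynomial.roots_prod _ _ (Finset.prod_ne_zero_iff.2 fun i _ => Polynomial.X_sub_C_ne_zero _)]
    simp only [Polynomial.roots_X_sub_C, Multiset.bind_singleton]
  refine exists_perm_of_map_univ_eq (Multiset.map_injective (RCLike.ofReal_injective (K := 𝕜)) ?_)
  rw [Multiset.map_map, Multiset.map_map, ← hroots, hA.roots_charpoly_eq_eigenvalues]

theorem exists_posSemidef_re_trace_eq (hM : M.IsHermitian) {a : ι → ℝ} (ha : ∀ i, 0 ≤ a i) :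
    ∃ (A : Matrix ι ι 𝕜) (hA : A.IsHermitian), A.PosSemidef ∧
      (∃ e : Equiv.Perm ι, ∀ i, hA.eigenvalues i ^ 2 = a (e i)) ∧
      RCLike.re (Aᴴ * M * A).trace = ∑ i, hM.eigenvalues i * a i := by
  set U := hM.eigenvectorUnitary
  set A := Unitary.conjStarAlgAut 𝕜 _ U (diagonal (RCLike.ofReal ∘ fun i => √(a i))) with hAdef
  have hpos : A.PosSemidef := by
    have hD : (diagonal (RCLike.ofReal ∘ fun i => √(a i)) : Matrix ι ι 𝕜).PosSemidef :=
      PosSemidef.diagonal fun i => RCLike.ofReal_nonneg.2 (Real.sqrt_nonneg _)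
    exact hD.mul_mul_conjTranspose_same _
  refine ⟨A, hpos.isHermitian, hpos, ?_, ?_⟩
  · obtain ⟨e, he⟩ := exists_perm_eigenvalues_conjStarAlgAut_diagonal U _ hpos.isHermitian
    refine ⟨e, fun i => ?_⟩
    rw [he, Function.comp_apply, Real.sq_sqrt (ha _)]
  · rw [trace_conjTranspose_mul_mul_self hpos.isHermitian, hAdef, conjStarAlgAut_diagonal_mul_self]
    conv_lhs => rw [hM.spectral_theorem]
    rw [← map_mul, trace_conjStarAlgAut, diagonal_mul_diagonal, trace_diagonal, map_sum]
    simp only [Function.comp_apply, Real.sq_sqrt (ha _), ← RCLike.ofReal_mul, RCLike.ofReal_re]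

end Marcus

open scoped ComplexOrder in
/-- The set `𝒜ₖ` of positive semidefinite matrices whose squared eigenvalues are, in some order, the
partial derivatives `σₖ₋₁,ᵢ(γ)` of `σₖ` at a point `γ` of the Gårding cone with `σₖ(γ) = 1`. As
usual `σₖ₋₁,ᵢ(γ)` is `σₖ₋₁` evaluated after setting `γᵢ = 0`. -/
def admissibleMatrices (𝕜 ι : Type*) [RCLike 𝕜] [Fintype ι] [DecidableEq ι] (k : ℕ) :
    Set (Matrix ι ι 𝕜) :=
  {A | ∃ hA : A.IsHermitian, A.PosSemidef ∧ ∃ γ : ι → ℝ, γ ∈ gardingCone Finset.univ k ∧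
    esymmOn Finset.univ k γ = 1 ∧ ∃ e : Equiv.Perm ι, ∀ i,
      hA.eigenvalues i ^ 2 = esymmOn Finset.univ (k - 1) (Function.update γ (e i) 0)}

section Permutation

variable {ι R : Type*} [Fintype ι] [CommSemiring R]

theorem esymmOn_univ_comp_perm (p : Equiv.Perm ι) (k : ℕ) (x : ι → R) :
    esymmOn Finset.univ k (x ∘ p) = esymmOn Finset.univ k x := by
  have h := esymmOn_map p.toEmbedding Finset.univ k x
  rw [Finset.map_univ_equiv] at h
  exact h.symm

theorem esymmOn_univ_erase_comp_perm [DecidableEq ι] (p : Equiv.Perm ι) (k : ℕ) (x : ι → R)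
    (i : ι) :
    esymmOn (Finset.univ.erase i) k (x ∘ p) = esymmOn (Finset.univ.erase (p i)) k x := by
  have h := esymmOn_map p.toEmbedding (Finset.univ.erase i) k x
  rw [Finset.map_erase, Finset.map_univ_equiv] at h
  exact h.symm

theorem comp_perm_mem_gardingLevelSet {k : ℕ} {x : ι → ℝ}
    (hx : x ∈ gardingLevelSet Finset.univ k) (p : Equiv.Perm ι) :
    x ∘ p ∈ gardingLevelSet Finset.univ k := by
  refine ⟨fun j hj hjk => ?_, ?_⟩
  · rw [esymmOn_univ_comp_perm]
    exact hx.1 j hj hjk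
  · rw [esymmOn_univ_comp_perm, hx.2]

end Permutation

section Matrices

variable {ι 𝕜 : Type*} [Fintype ι] [DecidableEq ι] [RCLike 𝕜] {M : Matrix ι ι 𝕜}

theorem exists_esymmDeriv_le_re_trace {A : Matrix ι ι 𝕜} {k : ℕ} (hM : M.IsHermitian)
    (hA : A ∈ admissibleMatrices 𝕜 ι (k + 1)) :
    ∃ z ∈ gardingLevelSet Finset.univ (k + 1),
      esymmDeriv Finset.univ k z hM.eigenvalues ≤ RCLike.re (Aᴴ * M * A).trace := by
  obtain ⟨hA, -, γ, hγ, hγ1, e, he⟩ := hA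
  obtain ⟨p, hp⟩ := exists_perm_sum_eigenvalues_mul_sq_le_re_trace hM hA
  refine ⟨γ ∘ (p.trans e), comp_perm_mem_gardingLevelSet ⟨hγ, hγ1⟩ _, le_of_eq_of_le ?_ hp⟩
  refine Finset.sum_congr rfl fun i _ => ?_
  rw [he, Nat.add_sub_cancel, esymmOn_update_zero (Finset.mem_univ _),
    esymmOn_univ_erase_comp_perm, Equiv.trans_apply]

theorem exists_mem_admissibleMatrices_re_trace_eq {k : ℕ} (hM : M.IsHermitian) {z : ι → ℝ}
    (hz : z ∈ gardingLevelSet Finset.univ (k + 1)) :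
    ∃ A ∈ admissibleMatrices 𝕜 ι (k + 1),
      RCLike.re (Aᴴ * M * A).trace = esymmDeriv Finset.univ k z hM.eigenvalues := by
  have ha (i : ι) : 0 ≤ esymmOn (Finset.univ.erase i) k z :=
    (esymmOn_pos (mem_gardingCone_erase (Finset.mem_univ i) hz.1) le_rfl).le
  obtain ⟨A, hA, hpos, ⟨e, he⟩, htr⟩ := exists_posSemidef_re_trace_eq hM ha
  refine ⟨A, ⟨hA, hpos, z, hz.1, hz.2, e, fun i => ?_⟩, htr⟩
  rw [he, Nat.add_sub_cancel, esymmOn_update_zero (Finset.mem_univ _)]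

theorem iInf_re_trace_eq_iInf_esymmDeriv (k : ℕ) (hM : M.IsHermitian) :
    ⨅ A ∈ admissibleMatrices 𝕜 ι (k + 1), ((RCLike.re (Aᴴ * M * A).trace : ℝ) : EReal) =
      ⨅ z ∈ gardingLevelSet Finset.univ (k + 1),
        ((esymmDeriv Finset.univ k z hM.eigenvalues : ℝ) : EReal) := by
  refine le_antisymm (le_iInf₂ fun z hz => ?_) (le_iInf₂ fun A hA => ?_)
  · obtain ⟨A, hA, hAz⟩ := exists_mem_admissibleMatrices_re_trace_eq hM hz
    exact iInf₂_le_of_le A hA (EReal.coe_le_coe_iff.2 hAz.le)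
  · obtain ⟨z, hz, hzA⟩ := exists_esymmDeriv_le_re_trace hM hA
    exact iInf₂_le_of_le z hz (EReal.coe_le_coe_iff.2 hzA)

theorem stmt_15_general {k : ℕ} (hk : 1 ≤ k) (hkι : k ≤ Fintype.card ι) (hM : M.IsHermitian) :
    (hM.eigenvalues ∈ closedGardingCone Finset.univ k →
      ⨅ A ∈ admissibleMatrices 𝕜 ι k, ((RCLike.re (Aᴴ * M * A).trace : ℝ) : EReal) =
        ((k * esymmOn Finset.univ k hM.eigenvalues ^ (1 / (k : ℝ)) : ℝ) : EReal)) ∧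
    (2 ≤ k → hM.eigenvalues ∉ closedGardingCone Finset.univ k →
      ⨅ A ∈ admissibleMatrices 𝕜 ι k, ((RCLike.re (Aᴴ * M * A).trace : ℝ) : EReal) = ⊥) := by
  obtain ⟨m, rfl⟩ := Nat.exists_eq_add_of_le' hk
  rw [iInf_re_trace_eq_iInf_esymmDeriv m hM]
  constructor
  · intro hy
    rw [iInf_esymmDeriv_eq hkι hy, Nat.cast_add_one]
  · intro hm hy
    exact iInf_esymmDeriv_eq_bot (by lia) hkι hy

end Matrices

theorem stmt_15 (n k : ℕ) (hk2 : 2 ≤ k) (hkn : k ≤ n)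
    (M : Matrix (Fin n) (Fin n) ℝ) (hM : M.IsHermitian) :
    ((∀ j, 1 ≤ j → j ≤ k → 0 ≤ esymm n j hM.eigenvalues) →
      (⨅ A ∈ {A : Matrix (Fin n) (Fin n) ℝ |
          ∃ hA : A.IsHermitian, A.PosSemidef ∧
            ∃ γ : Fin n → ℝ, (∀ j, 1 ≤ j → j ≤ k → 0 < esymm n j γ) ∧
              esymm n k γ = 1 ∧ ∃ e : Equiv.Perm (Fin n),
                ∀ i, (hA.eigenvalues i) ^ 2
                  = esymm n (k - 1) (Function.update γ (e i) 0)},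
          (((Aᵀ * M * A).trace : ℝ) : EReal))
        = (((k : ℝ) * esymm n k hM.eigenvalues ^ (1 / (k : ℝ)) : ℝ) : EReal)) ∧
    (¬ (∀ j, 1 ≤ j → j ≤ k → 0 ≤ esymm n j hM.eigenvalues) →
      (⨅ A ∈ {A : Matrix (Fin n) (Fin n) ℝ |
          ∃ hA : A.IsHermitian, A.PosSemidef ∧
            ∃ γ : Fin n → ℝ, (∀ j, 1 ≤ j → j ≤ k → 0 < esymm n j γ) ∧
              esymm n k γ = 1 ∧ ∃ e : Equiv.Perm (Fin n),
                ∀ i, (hA.eigenvalues i) ^ 2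
                  = esymm n (k - 1) (Function.update γ (e i) 0)},
          (((Aᵀ * M * A).trace : ℝ) : EReal)) = ⊥) := by
  obtain ⟨hmem, hnot⟩ :=
    stmt_15_general (one_le_two.trans hk2) (hkn.trans_eq (Fintype.card_fin n).symm) hM
  -- Over `ℝ`, `Aᴴ` and `RCLike.re` are definitionally `Aᵀ` and the identity.
  exact ⟨hmem, hnot hk2⟩
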